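/- arXiv:1806.05438 — 6 statements merged into one kernel-verified Lean document; each statement's English description precedes it below -/
import Mathlib

section
/- (Convergence of expected SGD iterates, Proposition 3.) Let F : H → ℝ be Fréchet differentiable with gradient ∇F, λ-strongly convex (for all g,h ∈ H, F(h) ≥ F(g) + ⟨∇F(g), h−g⟩ + (λ/2)‖h−g‖²) and (L+λ)-smooth (for all g,h, F(g+h) ≤ F(g) + ⟨∇F(g), h⟩ + ((L+λ)/2)‖h‖²), with minimizer g_λ ∈ H. Let g₁ ∈ H be deterministic, let (F_t) be a filtration, and let (G_t)_{t≥1} be H-valued random vectors, G_t measurable with respect to F_{t+1}, with E[G_t | F_t] = ∇F(g_t) and E[‖G_t‖² | F_t] ≤ ‖∇F(g_t)‖² + σ² almost surely, where (g_t) is (F_t)-adapted and defined by g_{t+1} = g_t − η_t G_t with η_t = 2/(λ(γ+t)) and γ > 0 chosen so that η₁ ≤ 1/(L+λ). Set ν = max{ (2/λ²)(L+λ)σ², (1+γ)(F(g₁) − F(g_λ)) }. Then for every T ≥ 1, E[F(g_T)] − F(g_λ) ≤ ν/(γ+T) and ‖E[g_T] − g_λ‖² ≤ 2ν/(λ(γ+T)).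 -/
open MeasureTheory Filter Set
open scoped RealInnerProductSpace

lemma sgd_inner_aux {H : Type*} [NormedAddCommGroup H] [InnerProductSpace ℝ H] [CompleteSpace H]
    {Ω : Type*} {m m0 : MeasurableSpace Ω} (μ : Measure Ω) [IsProbabilityMeasure μ]
    (hm : m ≤ m0) (G D : Ω → H) (hG : Integrable G μ) (hG2 : Integrable (fun ω => ‖G ω‖ ^ 2) μ)
    (hD : μ[G | m] =ᵐ[μ] D) :
    Integrable (fun ω => ‖D ω‖ ^ 2) μ ∧ Integrable (fun ω => ⟪D ω, G ω⟫) μ ∧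
      ∫ ω, ⟪D ω, G ω⟫ ∂μ = ∫ ω, ‖D ω‖ ^ 2 ∂μ := by
  have hGL : MemLp G 2 μ := (memLp_two_iff_integrable_sq_norm hG.aestronglyMeasurable).2 hG2
  have hCL : MemLp (μ[G | m]) 2 μ := hGL.condExp (by norm_num)
  have hDL : MemLp D 2 μ := hCL.ae_eq hD
  have hDm : AEStronglyMeasurable[m] D μ :=
    (stronglyMeasurable_condExp.aestronglyMeasurable).congr hD
  have hin : Integrable (fun ω => ⟪D ω, G ω⟫) μ := by
    refine (hDL.norm.integrable_mul hGL.norm).mono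
      (hDL.aestronglyMeasurable.inner hGL.aestronglyMeasurable) (Eventually.of_forall fun ω => ?_)
    simpa using norm_inner_le_norm (𝕜 := ℝ) (D ω) (G ω)
  refine ⟨(memLp_two_iff_integrable_sq_norm hDL.aestronglyMeasurable).1 hDL, hin, ?_⟩
  have h := condExp_bilin_of_aestronglyMeasurable_left (innerSL ℝ) hDm hin hG
  rw [← integral_condExp hm]
  refine integral_congr_ae ?_
  filter_upwards [h, hD] with ω h1 h2
  have h3 : (μ[fun ω => ⟪D ω, G ω⟫ | m]) ω = ⟪D ω, (μ[G | m]) ω⟫ := h1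
  rw [h3, h2, real_inner_self_eq_norm_sq]

lemma sgd_PL {H : Type*} [NormedAddCommGroup H] [InnerProductSpace ℝ H]
    (lam : ℝ) (hlam : 0 < lam) (F : H → ℝ) (F' : H → H)
    (hsc : ∀ g h : H, F g + ⟪F' g, h - g⟫ + lam / 2 * ‖h - g‖ ^ 2 ≤ F h) (x y : H) :
    2 * lam * (F x - F y) ≤ ‖F' x‖ ^ 2 := by
  have h1 := hsc x y
  have h2 := sq_nonneg ‖F' x + lam • (y - x)‖
  rw [norm_add_sq_real, norm_smul, mul_pow, inner_smul_right, Real.norm_eq_abs, sq_abs] at h2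
  nlinarith

/-- Convergence of expected SGD iterates (Proposition 3): for a `λ`-strongly
convex, `(L+λ)`-smooth objective `F` and SGD with unbiased stochastic gradients
of variance at most `σ²` and learning rates `η_t = 2/(λ(γ+t))`,
`E[F(g_T)] − F(g_λ) ≤ ν/(γ+T)` and `‖E[g_T] − g_λ‖² ≤ 2ν/(λ(γ+T))`. -/
theorem expected_sgd_convergence
    {H : Type*} [NormedAddCommGroup H] [InnerProductSpace ℝ H] [CompleteSpace H]
    {Ω : Type*} {m0 : MeasurableSpace Ω} (μ : Measure Ω) [IsProbabilityMeasure μ]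
    (ℱ : Filtration ℕ m0)
    (lam L σ γ : ℝ) (hlam : 0 < lam) (hL : 0 < L) (hσ : 0 < σ) (hγ : 0 < γ)
    (F : H → ℝ) (F' : H → H)
    (hgrad : ∀ g : H, HasGradientAt F (F' g) g)
    (hsc : ∀ g h : H, F g + ⟪F' g, h - g⟫ + lam / 2 * ‖h - g‖ ^ 2 ≤ F h)
    (hsmooth : ∀ g h : H, F (g + h) ≤ F g + ⟪F' g, h⟫ + (L + lam) / 2 * ‖h‖ ^ 2)
    (glam : H) (hglam : ∀ g : H, F glam ≤ F g)
    (η : ℕ → ℝ) (hη : ∀ t : ℕ, 1 ≤ t → η t = 2 / (lam * (γ + t)))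
    (hη1 : 2 / (lam * (γ + 1)) ≤ 1 / (L + lam))
    (g1 : H)
    (g : ℕ → Ω → H) (G : ℕ → Ω → H)
    (hadapt : ∀ t : ℕ, StronglyMeasurable[ℱ t] (g t))
    (hGmeas : ∀ t : ℕ, StronglyMeasurable[ℱ (t + 1)] (G t))
    (hinit : ∀ ω : Ω, g 1 ω = g1)
    (hGint : ∀ t : ℕ, Integrable (G t) μ)
    (hGsqint : ∀ t : ℕ, Integrable (fun ω => ‖G t ω‖ ^ 2) μ)
    (hGmean : ∀ t : ℕ, 1 ≤ t → μ[G t | ℱ t] =ᵐ[μ] fun ω => F' (g t ω))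
    (hGvar : ∀ t : ℕ, 1 ≤ t →
      μ[fun ω => ‖G t ω‖ ^ 2 | ℱ t] ≤ᵐ[μ] fun ω => ‖F' (g t ω)‖ ^ 2 + σ ^ 2)
    (hupd : ∀ t : ℕ, 1 ≤ t → ∀ ω : Ω, g (t + 1) ω = g t ω - η t • G t ω)
    (hFint : ∀ t : ℕ, Integrable (fun ω => F (g t ω)) μ)
    (hgint : ∀ t : ℕ, Integrable (g t) μ)
    (ν : ℝ)
    (hν : ν = max (2 / lam ^ 2 * (L + lam) * σ ^ 2) ((1 + γ) * (F g1 - F glam)))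
    (T : ℕ) (hT : 1 ≤ T) :
    (∫ ω, F (g T ω) ∂μ) - F glam ≤ ν / (γ + T) ∧
    ‖(∫ ω, g T ω ∂μ) - glam‖ ^ 2 ≤ 2 * ν / (lam * (γ + T)) := by
  have hM : 0 < L + lam := by linarith
  have hγ1 : 2 < γ + 1 := by
    rw [div_le_div_iff₀ (by positivity) hM] at hη1
    nlinarith
  have hν1 : 2 / lam ^ 2 * (L + lam) * σ ^ 2 ≤ ν := hν ▸ le_max_left _ _
  have hν2 : (1 + γ) * (F g1 - F glam) ≤ ν := hν ▸ le_max_right _ _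
  have hν0 : 0 ≤ ν := le_trans (by positivity) hν1
  have key : ∀ t : ℕ, 1 ≤ t → (∫ ω, F (g t ω) ∂μ) - F glam ≤ ν / (γ + t) := by
    intro t ht
    induction t, ht using Nat.le_induction with
    | base =>
      simp only [hinit, integral_const, probReal_univ, one_smul]
      rw [le_div_iff₀ (by push_cast; linarith)]
      push_cast
      linarith
    | succ t ht ih =>
      obtain ⟨hD2, hDG, hDGeq⟩ := sgd_inner_aux μ (ℱ.le t) (G t) (fun ω => F' (g t ω))
        (hGint t) (hGsqint t) (hGmean t ht)
      have hvar : ∫ ω, ‖G t ω‖ ^ 2 ∂μ ≤ (∫ ω, ‖F' (g t ω)‖ ^ 2 ∂μ) + σ ^ 2 := by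
        rw [← integral_condExp (ℱ.le t)]
        refine (integral_mono_ae integrable_condExp (hD2.add (integrable_const _))
          (hGvar t ht)).trans (le_of_eq ?_)
        simp only [Pi.add_apply]
        rw [integral_add hD2 (integrable_const _)]
        simp
      have hstep : ∫ ω, F (g (t + 1) ω) ∂μ ≤ (∫ ω, F (g t ω) ∂μ)
          - η t * (∫ ω, ‖F' (g t ω)‖ ^ 2 ∂μ)
          + (L + lam) / 2 * η t ^ 2 * ∫ ω, ‖G t ω‖ ^ 2 ∂μ := by
        have hi1 : Integrable (fun ω => F (g t ω) - η t * ⟪F' (g t ω), G t ω⟫) μ :=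
          (hFint t).sub (hDG.const_mul (η t))
        have hi2 := (hGsqint t).const_mul ((L + lam) / 2 * η t ^ 2)
        have : ∫ ω, F (g (t + 1) ω) ∂μ ≤ ∫ ω, ((F (g t ω) - η t * ⟪F' (g t ω), G t ω⟫)
            + (L + lam) / 2 * η t ^ 2 * ‖G t ω‖ ^ 2) ∂μ := by
          refine integral_mono (hFint _) (hi1.add hi2) fun ω => ?_
          have h := hsmooth (g t ω) (-(η t • G t ω))
          rw [← sub_eq_add_neg, ← hupd t ht ω, inner_neg_right, inner_smul_right, norm_neg,
            norm_smul, mul_pow, Real.norm_eq_abs, sq_abs] at h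
          simp only
          linarith
        refine this.trans (le_of_eq ?_)
        rw [integral_add hi1 hi2, integral_sub (hFint t) (hDG.const_mul (η t)),
          integral_const_mul, integral_const_mul, hDGeq]
      have hPL : 2 * lam * ((∫ ω, F (g t ω) ∂μ) - F glam) ≤ ∫ ω, ‖F' (g t ω)‖ ^ 2 ∂μ := by
        have h : ∫ ω, 2 * lam * (F (g t ω) - F glam) ∂μ ≤ ∫ ω, ‖F' (g t ω)‖ ^ 2 ∂μ :=
          integral_mono (((hFint t).sub (integrable_const _)).const_mul _) hD2
            fun ω => sgd_PL lam hlam F F' hsc _ _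
        rw [integral_const_mul, integral_sub (hFint t) (integrable_const _)] at h
        simpa using h
      have hd : 0 ≤ ∫ ω, ‖F' (g t ω)‖ ^ 2 ∂μ := integral_nonneg fun ω => by positivity
      have ht' : (1 : ℝ) ≤ t := by exact_mod_cast ht
      push_cast
      rw [hη t ht] at hstep
      generalize (∫ ω, F (g (t + 1) ω) ∂μ) = a' at *
      generalize (∫ ω, F (g t ω) ∂μ) = a at *
      generalize (∫ ω, ‖F' (g t ω)‖ ^ 2 ∂μ) = d at *
      generalize (∫ ω, ‖G t ω‖ ^ 2 ∂μ) = q at *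
      obtain ⟨s, hs⟩ : ∃ s : ℝ, s = γ + t := ⟨_, rfl⟩
      have hs2 : 2 < s := by linarith
      have hs0 : 0 < s := by linarith
      rw [← add_assoc, ← hs]
      rw [← hs] at hstep ih
      obtain ⟨e, he⟩ : ∃ e : ℝ, e = 2 / (lam * s) := ⟨_, rfl⟩
      rw [← he] at hstep
      have he0 : 0 < e := by rw [he]; positivity
      have heM : (L + lam) * e ≤ 1 := by
        have : e ≤ 1 / (L + lam) := by
          refine le_trans ?_ hη1
          rw [he]
          gcongr
          linarith
        rw [le_div_iff₀ hM] at this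
        linarith
      have hel : e * lam = 2 / s := by rw [he]; field_simp
      have h1 : a' - F glam ≤ (1 - e * lam) * (a - F glam) + (L + lam) / 2 * e ^ 2 * σ ^ 2 := by
        have hq : (L + lam) / 2 * e ^ 2 * q ≤ (L + lam) / 2 * e ^ 2 * (d + σ ^ 2) := by gcongr
        have h3 : (L + lam) * e * (e * d) ≤ 1 * (e * d) := by gcongr
        have h4 := mul_le_mul_of_nonneg_left hPL he0.le
        nlinarith
      have h2 : (L + lam) / 2 * e ^ 2 * σ ^ 2 ≤ ν / s ^ 2 := by
        refine le_trans (le_of_eq ?_) (div_le_div_of_nonneg_right hν1 (by positivity))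
        rw [he]; field_simp
      have h3 : (1 - e * lam) * (a - F glam) ≤ (1 - 2 / s) * (ν / s) := by
        rw [hel]
        refine mul_le_mul_of_nonneg_left ih ?_
        rw [sub_nonneg, div_le_one hs0]; exact hs2.le
      have h4 : (1 - 2 / s) * (ν / s) + ν / s ^ 2 ≤ ν / (s + 1) := by
        have : (1 - 2 / s) * (ν / s) + ν / s ^ 2 = ν * (s - 1) / s ^ 2 := by field_simp; ring
        rw [this, div_le_div_iff₀ (by positivity) (by positivity)]
        nlinarith
      linarith
  have hk := key T hT
  refine ⟨hk, ?_⟩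
  have hT' : (1 : ℝ) ≤ T := by exact_mod_cast hT
  have hz : F' glam = 0 := by
    have hmin : IsLocalMin F glam := Eventually.of_forall hglam
    have := hmin.hasFDerivAt_eq_zero (hasGradientAt_iff_hasFDerivAt.1 (hgrad glam))
    simpa using this
  have h1 := hsc glam (∫ ω, g T ω ∂μ)
  rw [hz, inner_zero_left] at h1
  have hJ : F (∫ ω, g T ω ∂μ) ≤ ∫ ω, F (g T ω) ∂μ := by
    set x := ∫ ω, g T ω ∂μ with hx
    have hi : Integrable (fun ω => g T ω - x) μ := (hgint T).sub (integrable_const _)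
    have hin : Integrable (fun ω => ⟪F' x, g T ω - x⟫) μ := hi.const_inner _
    have h : ∫ ω, (F x + ⟪F' x, g T ω - x⟫) ∂μ ≤ ∫ ω, F (g T ω) ∂μ := by
      refine integral_mono ((integrable_const _).add hin) (hFint T) fun ω => ?_
      have h := hsc x (g T ω)
      have : 0 ≤ lam / 2 * ‖g T ω - x‖ ^ 2 := by positivity
      simp only
      linarith
    rw [integral_add (integrable_const _) hin, integral_inner hi,
      integral_sub (hgint T) (integrable_const _)] at h
    simpa [← hx] using h
  have hpos : 0 < γ + T := by linarith
  rw [show 2 * ν / (lam * (γ + T)) = (2 / lam) * (ν / (γ + T)) by field_simp]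
  have h2 : lam / 2 * ‖(∫ ω, g T ω ∂μ) - glam‖ ^ 2 ≤ ν / (γ + T) := by linarith
  calc _ = 2 / lam * (lam / 2 * ‖(∫ ω, g T ω ∂μ) - glam‖ ^ 2) := by field_simp
    _ ≤ _ := by gcongr
end

section
/- (One-sample stability of SGD iterates.) Fix sample sequences z = (z₁,…,z_T) and z' = (z₁,…,z_{t−1}, z'_t, z_{t+1},…,z_T) in Z^T differing only in the t-th coordinate. Let g_{s} and g'_{s} be the SGD iterates started from the same g₁ ∈ H with ‖g₁‖ ≤ (2η₁ + 1/λ)MR, updated by g_{s+1} = g_s − η_s(∇ℓ(g_s, z_s) + λ g_s) and g'_{s+1} = g'_s − η_s(∇ℓ(g'_s, z'_s) + λ g'_s), with decreasing learning rates η_s satisfying η₁ ≤ min{1/L, 1/(2λ)} and η_sλ ≤ 1. Then: (1) ‖g_{t+1} − g'_{t+1}‖ ≤ 6MR·η_t; and (2) for every s ≥ t+1, ‖g_{s+1} − g'_{s+1}‖ ≤ (1 − η_s λ)·‖g_s − g'_s‖. Consequently, when η_s = 2/(λ(γ+s)) with γ > 0, one has ‖g_{T+1} − g'_{T+1}‖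 ≤ 12MR/(λ(γ+T)). -/
open MeasureTheory Filter Set
open scoped RealInnerProductSpace

lemma sgd_first_order {H : Type*} [NormedAddCommGroup H] [InnerProductSpace ℝ H] [CompleteSpace H]
    (f : H → ℝ) (f' : H → H) (hconv : ConvexOn ℝ Set.univ f)
    (hgrad : ∀ g, HasGradientAt f (f' g) g) (x y : H) :
    f x + ⟪f' x, y - x⟫ ≤ f y := by
  have hc : ConvexOn ℝ Set.univ (fun r : ℝ => f (AffineMap.lineMap x y r)) := by
    have := hconv.comp_affineMap (AffineMap.lineMap (k := ℝ) x y)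
    simpa [Function.comp_def] using this
  have hl : HasDerivAt (fun r : ℝ => AffineMap.lineMap x y r) (y - x) (0 : ℝ) :=
    AffineMap.hasDerivAt_lineMap
  have hg : HasFDerivAt f (InnerProductSpace.toDual ℝ H (f' x)) (AffineMap.lineMap x y (0 : ℝ)) := by
    simpa using (hgrad x).hasFDerivAt
  have hd := hg.comp_hasDerivAt (0 : ℝ) hl
  have := hc.le_slope_of_hasDerivAt (mem_univ 0) (mem_univ 1) zero_lt_one hd
  simp [slope_def_field] at this
  linarith

lemma sgd_coco_aux {H : Type*} [NormedAddCommGroup H] [InnerProductSpace ℝ H] [CompleteSpace H]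
    (f : H → ℝ) (f' : H → H) (L : ℝ) (hL : 0 < L) (hconv : ConvexOn ℝ Set.univ f)
    (hgrad : ∀ g, HasGradientAt f (f' g) g)
    (hsmooth : ∀ g h : H, f (g + h) ≤ f g + ⟪f' g, h⟫ + L / 2 * ‖h‖ ^ 2) (x y : H) :
    f x + ⟪f' x, y - x⟫ + 1 / (2 * L) * ‖f' y - f' x‖ ^ 2 ≤ f y := by
  have h1 := sgd_first_order f f' hconv hgrad x (y + (-(1 / L)) • (f' y - f' x))
  have h2 := hsmooth y ((-(1 / L)) • (f' y - f' x))
  have e : y + (-(1 / L)) • (f' y - f' x) - x = (y - x) + (-(1 / L)) • (f' y - f' x) := by abel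
  rw [e, inner_add_right, inner_smul_right] at h1
  rw [inner_smul_right, norm_smul, mul_pow, Real.norm_eq_abs, sq_abs] at h2
  have e2 : ⟪f' y, f' y - f' x⟫ - ⟪f' x, f' y - f' x⟫ = ‖f' y - f' x‖ ^ 2 := by
    rw [← inner_sub_left, real_inner_self_eq_norm_sq]
  have e3 : L / 2 * ((-(1 / L)) ^ 2 * ‖f' y - f' x‖ ^ 2) = 1 / (2 * L) * ‖f' y - f' x‖ ^ 2 := by
    field_simp
  have e4 : 1 / L * ‖f' y - f' x‖ ^ 2 = 2 * (1 / (2 * L) * ‖f' y - f' x‖ ^ 2) := by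
    field_simp
  rw [e3] at h2
  rw [← e2, mul_sub] at e4
  rw [e2] at e4
  linarith

lemma sgd_coco {H : Type*} [NormedAddCommGroup H] [InnerProductSpace ℝ H] [CompleteSpace H]
    (f : H → ℝ) (f' : H → H) (L : ℝ) (hL : 0 < L) (hconv : ConvexOn ℝ Set.univ f)
    (hgrad : ∀ g, HasGradientAt f (f' g) g)
    (hsmooth : ∀ g h : H, f (g + h) ≤ f g + ⟪f' g, h⟫ + L / 2 * ‖h‖ ^ 2) (x y : H) :
    ‖f' x - f' y‖ ^ 2 ≤ L * ⟪x - y, f' x - f' y⟫ := by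
  have h1 := sgd_coco_aux f f' L hL hconv hgrad hsmooth x y
  have h2 := sgd_coco_aux f f' L hL hconv hgrad hsmooth y x
  rw [norm_sub_rev] at h1
  have e : ⟪x - y, f' x - f' y⟫ = -⟪f' x, y - x⟫ - ⟪f' y, x - y⟫ := by
    rw [real_inner_comm, inner_sub_left, ← neg_sub x y, inner_neg_right]; ring
  have h3 : 2 * (1 / (2 * L) * ‖f' x - f' y‖ ^ 2) ≤ ⟪x - y, f' x - f' y⟫ := by
    rw [e]; linarith
  have e4 : ‖f' x - f' y‖ ^ 2 = L * (2 * (1 / (2 * L) * ‖f' x - f' y‖ ^ 2)) := by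
    field_simp
  rw [e4]
  exact mul_le_mul_of_nonneg_left h3 hL.le

/-- One-sample stability of SGD iterates: two SGD runs whose sample sequences
differ only in the `t`-th sample stay close, with geometric contraction after
step `t`; consequently, with `η_s = 2/(λ(γ+s))`, the final iterates differ by
at most `12MR/(λ(γ+T))`. -/
theorem sgd_one_sample_stability
    {H : Type*} [NormedAddCommGroup H] [InnerProductSpace ℝ H] [CompleteSpace H]
    {Z : Type*}
    (lam M R L : ℝ) (hlam : 0 < lam) (hM : 0 < M) (hR : 0 < R) (hL : 0 < L)
    (ℓ : H → Z → ℝ) (ℓ' : H → Z → H)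
    (hconv : ∀ z : Z, ConvexOn ℝ Set.univ fun g => ℓ g z)
    (hgrad : ∀ z : Z, ∀ g : H, HasGradientAt (fun g => ℓ g z) (ℓ' g z) g)
    (hsmooth : ∀ z : Z, ∀ g h : H,
      ℓ (g + h) z ≤ ℓ g z + ⟪ℓ' g z, h⟫ + L / 2 * ‖h‖ ^ 2)
    (hgradbd : ∀ z : Z, ∀ g : H, ‖ℓ' g z‖ ≤ M * R)
    (T t : ℕ) (ht : 1 ≤ t) (htT : t ≤ T)
    (z z' : ℕ → Z) (hzz' : ∀ s : ℕ, s ≠ t → z s = z' s)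
    (η : ℕ → ℝ)
    (hηpos : ∀ s : ℕ, 1 ≤ s → 0 < η s)
    (hηdec : ∀ s : ℕ, 1 ≤ s → η (s + 1) ≤ η s)
    (hη1 : η 1 ≤ min (1 / L) (1 / (2 * lam)))
    (hηlam : ∀ s : ℕ, 1 ≤ s → η s * lam ≤ 1)
    (g g' : ℕ → H)
    (hinit : g 1 = g' 1)
    (hinitbd : ‖g 1‖ ≤ (2 * η 1 + 1 / lam) * M * R)
    (hupd : ∀ s : ℕ, 1 ≤ s → g (s + 1) = g s - η s • (ℓ' (g s) (z s) + lam • g s))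
    (hupd' : ∀ s : ℕ, 1 ≤ s → g' (s + 1) = g' s - η s • (ℓ' (g' s) (z' s) + lam • g' s)) :
    ‖g (t + 1) - g' (t + 1)‖ ≤ 6 * M * R * η t ∧
    (∀ s : ℕ, t + 1 ≤ s → ‖g (s + 1) - g' (s + 1)‖ ≤ (1 - η s * lam) * ‖g s - g' s‖) ∧
    (∀ γ : ℝ, 0 < γ → (∀ s : ℕ, 1 ≤ s → η s = 2 / (lam * (γ + s))) →
      ‖g (T + 1) - g' (T + 1)‖ ≤ 12 * M * R / (lam * (γ + T))) := by
  have hηle : ∀ s : ℕ, 1 ≤ s → η s ≤ η 1 := by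
    intro s hs
    induction s, hs using Nat.le_induction with
    | base => exact le_rfl
    | succ n hn ih => exact (hηdec n hn).trans ih
  have hηL : ∀ s : ℕ, 1 ≤ s → η s * L ≤ 1 := by
    intro s hs
    have := (hηle s hs).trans (hη1.trans (min_le_left _ _))
    rwa [le_div_iff₀ hL] at this
  have hηl : ∀ s : ℕ, 1 ≤ s → 2 * (η s * lam) ≤ 1 := by
    intro s hs
    have := (hηle s hs).trans (hη1.trans (min_le_right _ _))
    rw [le_div_iff₀ (by positivity)] at this
    linarith
  have heq : ∀ s : ℕ, 1 ≤ s → s ≤ t → g s = g' s := by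
    intro s hs
    induction s, hs using Nat.le_induction with
    | base => intro _; exact hinit
    | succ n hn ih =>
      intro h
      rw [hupd n hn, hupd' n hn, ih (by omega), hzz' n (by omega)]
  have hMR : 0 < M * R := mul_pos hM hR
  have p1 : ‖g (t + 1) - g' (t + 1)‖ ≤ 6 * M * R * η t := by
    have e : g (t + 1) - g' (t + 1) = η t • (ℓ' (g' t) (z' t) - ℓ' (g' t) (z t)) := by
      rw [hupd t ht, hupd' t ht, heq t ht le_rfl]; module
    have hp := hηpos t ht
    rw [e, norm_smul, Real.norm_eq_abs, abs_of_pos hp]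
    have h1 := norm_sub_le (ℓ' (g' t) (z' t)) (ℓ' (g' t) (z t))
    have h2 := hgradbd (z' t) (g' t)
    have h3 := hgradbd (z t) (g' t)
    have : ‖ℓ' (g' t) (z' t) - ℓ' (g' t) (z t)‖ ≤ 6 * (M * R) := by linarith
    nlinarith [mul_le_mul_of_nonneg_left this hp.le]
  have p2 : ∀ s : ℕ, t + 1 ≤ s →
      ‖g (s + 1) - g' (s + 1)‖ ≤ (1 - η s * lam) * ‖g s - g' s‖ := by
    intro s hs
    have hs1 : 1 ≤ s := by omega
    have hp := hηpos s hs1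
    have ha := hηl s hs1
    have hb := hηL s hs1
    have hco := sgd_coco (fun g => ℓ g (z' s)) (fun g => ℓ' g (z' s)) L hL (hconv _) (hgrad _)
      (hsmooth _) (g s) (g' s)
    have e : g (s + 1) - g' (s + 1) = (1 - η s * lam) • (g s - g' s)
        - η s • (ℓ' (g s) (z' s) - ℓ' (g' s) (z' s)) := by
      rw [hupd s hs1, hupd' s hs1, hzz' s (by omega)]; module
    rw [e]
    generalize g s - g' s = d at *
    generalize ℓ' (g s) (z' s) - ℓ' (g' s) (z' s) = D at *
    have hnn : 0 ≤ (1 - η s * lam) * ‖d‖ := mul_nonneg (by linarith) (norm_nonneg _)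
    refine le_of_sq_le_sq ?_ hnn
    rw [norm_sub_sq_real, norm_smul, norm_smul, inner_smul_left, inner_smul_right, mul_pow,
      mul_pow, mul_pow, Real.norm_eq_abs, Real.norm_eq_abs, sq_abs, sq_abs]
    simp only [conj_trivial]
    have hi : 0 ≤ ⟪d, D⟫ := by
      have := (sq_nonneg ‖D‖).trans hco
      exact nonneg_of_mul_nonneg_right this hL
    have h1 : η s * ‖D‖ ^ 2 ≤ ⟪d, D⟫ := by
      calc η s * ‖D‖ ^ 2 ≤ η s * (L * ⟪d, D⟫) := mul_le_mul_of_nonneg_left hco hp.le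
        _ = (η s * L) * ⟪d, D⟫ := by ring
        _ ≤ 1 * ⟪d, D⟫ := mul_le_mul_of_nonneg_right hb hi
        _ = _ := one_mul _
    have h2 : η s * ‖D‖ ^ 2 ≤ 2 * (1 - η s * lam) * ⟪d, D⟫ := by
      have := mul_nonneg (by linarith : 0 ≤ 1 - 2 * (η s * lam)) hi
      linarith
    have h3 := mul_le_mul_of_nonneg_left h2 hp.le
    linarith
  refine ⟨p1, p2, ?_⟩
  intro γ hγ hη
  have key : ∀ n : ℕ, t ≤ n → ‖g (n + 1) - g' (n + 1)‖ ≤ 12 * M * R / (lam * (γ + n)) := by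
    intro n hn
    induction n, hn using Nat.le_induction with
    | base =>
      refine p1.trans (le_of_eq ?_)
      rw [hη t ht]; ring
    | succ n hn ih =>
      have hn1 : (1 : ℝ) ≤ n := by exact_mod_cast ht.trans hn
      have h := p2 (n + 1) (by omega)
      have h0 := hηlam (n + 1) (by omega)
      refine h.trans ((mul_le_mul_of_nonneg_left ih (by linarith)).trans ?_)
      rw [hη (n + 1) (by omega)]
      push_cast
      have hc : 0 < γ + n := by linarith
      have e : 1 - 2 / (lam * (γ + (n + 1))) * lam = (γ + n - 1) / (γ + (n + 1)) := by
        have : γ + ((n : ℝ) + 1) ≠ 0 := by linarith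
        field_simp
        ring
      rw [e, div_mul_div_comm, div_le_div_iff₀ (by positivity) (by positivity)]
      have : 0 ≤ 12 * M * R * lam * (γ + (n + 1)) := by positivity
      linarith
  exact key T htT
end

section
/- (Convergence of the regularization path.) Let H be a real Hilbert space and L : H → ℝ a convex continuous function. Suppose g_* ∈ H is the unique minimizer of L over H (i.e. L(g_*) ≤ L(g) for all g, and any g with L(g) = L(g_*) equals g_*). For each λ > 0 let g_λ ∈ H be a minimizer of L_λ(g) = L(g) + (λ/2)‖g‖². Then g_λ converges to g_* in norm as λ → 0⁺, i.e. ‖g_λ − g_*‖ → 0. -/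
open MeasureTheory Filter Set
open scoped RealInnerProductSpace

/-- Convergence of the regularization path: the minimizers `g_λ` of the
regularized risk `L(g) + (λ/2)‖g‖²` converge in norm to the unique minimizer
`g_*` of the convex continuous function `L` as `λ → 0⁺`. -/
theorem regularization_path_convergence
    {H : Type*} [NormedAddCommGroup H] [InnerProductSpace ℝ H] [CompleteSpace H]
    (L : H → ℝ) (hLconv : ConvexOn ℝ Set.univ L) (hLcont : Continuous L)
    (gstar : H) (hmin : ∀ g : H, L gstar ≤ L g)
    (huniq : ∀ g : H, L g = L gstar → g = gstar)
    (glam : ℝ → H)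
    (hglam : ∀ lam : ℝ, 0 < lam → ∀ g : H,
      L (glam lam) + lam / 2 * ‖glam lam‖ ^ 2 ≤ L g + lam / 2 * ‖g‖ ^ 2) :
    Filter.Tendsto (fun lam => ‖glam lam - gstar‖)
      (nhdsWithin 0 (Set.Ioi (0 : ℝ))) (nhds 0) := by
  have key : ∀ lam mu : ℝ, 0 < lam → lam ≤ mu →
      ‖glam lam - glam mu‖ ^ 2 ≤ 2 * (‖glam lam‖ ^ 2 - ‖glam mu‖ ^ 2) := by
    intro lam mu hl hlm
    rcases hlm.eq_or_lt with rfl | hlt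
    · simp
    have hm : 0 < mu := hl.trans hlt
    have h1 := hglam lam hl (glam mu)
    have h2 := hglam mu hm (glam lam)
    have hab : 0 ≤ ‖glam lam‖ ^ 2 - ‖glam mu‖ ^ 2 := by
      have h : 0 ≤ (mu - lam) * (‖glam lam‖ ^ 2 - ‖glam mu‖ ^ 2) := by nlinarith
      exact nonneg_of_mul_nonneg_right h (sub_pos.2 hlt)
    have hL : L (glam lam) ≤ L (glam mu) := by nlinarith
    have h3 := hglam mu hm ((1 / 2 : ℝ) • glam lam + (1 / 2 : ℝ) • glam mu)
    have h4 := hLconv.2 (mem_univ (glam lam)) (mem_univ (glam mu))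
      (by norm_num : (0 : ℝ) ≤ 1 / 2) (by norm_num : (0 : ℝ) ≤ 1 / 2) (by norm_num)
    simp only [smul_eq_mul] at h4
    have h5 : ‖(1 / 2 : ℝ) • glam lam + (1 / 2 : ℝ) • glam mu‖ ^ 2 =
        (1 / 2) * ‖glam lam‖ ^ 2 + (1 / 2) * ‖glam mu‖ ^ 2
          - (1 / 4) * ‖glam lam - glam mu‖ ^ 2 := by
      rw [← smul_add, norm_smul, mul_pow, @norm_add_sq_real, @norm_sub_sq_real]
      norm_num
      ring
    rw [h5] at h3
    have h6 : 0 ≤ mu * (2 * (‖glam lam‖ ^ 2 - ‖glam mu‖ ^ 2)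
        - ‖glam lam - glam mu‖ ^ 2) := by nlinarith
    have := nonneg_of_mul_nonneg_right h6 hm
    linarith
  have hbd : ∀ lam : ℝ, 0 < lam → ‖glam lam‖ ^ 2 ≤ ‖gstar‖ ^ 2 := by
    intro lam hl
    have h1 := hglam lam hl gstar
    have h2 := hmin (glam lam)
    have h : 0 ≤ lam * (‖gstar‖ ^ 2 - ‖glam lam‖ ^ 2) := by nlinarith
    have := nonneg_of_mul_nonneg_right h hl
    linarith
  have hcau : Cauchy (map glam (nhdsWithin 0 (Ioi (0 : ℝ)))) := by
    rw [Metric.cauchy_iff]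
    refine ⟨inferInstance, fun ε hε => ?_⟩
    set S : Set ℝ := (fun lam => ‖glam lam‖ ^ 2) '' Ioi (0 : ℝ) with hS
    have hSb : BddAbove S := ⟨‖gstar‖ ^ 2, by rintro _ ⟨l, hl, rfl⟩; exact hbd l hl⟩
    have hSn : S.Nonempty := ⟨_, 1, by simp, rfl⟩
    obtain ⟨_, ⟨mu, hmu, rfl⟩, hlt⟩ := exists_lt_of_lt_csSup hSn
      (sub_lt_self (sSup S) (by positivity : 0 < ε ^ 2 / 8))
    have hmu' : (0 : ℝ) < mu := hmu
    have hd : ∀ l ∈ Ioo 0 mu, ‖glam l - glam mu‖ < ε / 2 := by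
      intro l hl
      have h1 := key l mu hl.1 hl.2.le
      have h2 : ‖glam l‖ ^ 2 ≤ sSup S := le_csSup hSb ⟨l, hl.1, rfl⟩
      simp only at hlt
      refine lt_of_pow_lt_pow_left₀ 2 (by positivity) ?_
      linarith
    refine ⟨glam '' Ioo 0 mu, image_mem_map (Ioo_mem_nhdsGT hmu'), ?_⟩
    rintro _ ⟨x, hx, rfl⟩ _ ⟨y, hy, rfl⟩
    have h1 := hd x hx
    have h2 := hd y hy
    rw [← dist_eq_norm] at h1 h2
    have := dist_triangle_right (glam x) (glam y) (glam mu)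
    linarith
  obtain ⟨h, hh⟩ := cauchy_map_iff_exists_tendsto.1 hcau
  have hLh : L h ≤ L gstar := by
    have t1 : Tendsto (fun l => L (glam l)) (nhdsWithin 0 (Ioi (0 : ℝ))) (nhds (L h)) :=
      (hLcont.tendsto h).comp hh
    have t2 : Tendsto (fun l : ℝ => L gstar + l / 2 * ‖gstar‖ ^ 2)
        (nhdsWithin 0 (Ioi (0 : ℝ))) (nhds (L gstar)) := by
      have hc : Continuous (fun l : ℝ => L gstar + l / 2 * ‖gstar‖ ^ 2) := by fun_prop
      have := hc.tendsto 0
      simp only [zero_div, zero_mul, add_zero] at this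
      exact this.mono_left nhdsWithin_le_nhds
    refine le_of_tendsto_of_tendsto t1 t2 ?_
    filter_upwards [self_mem_nhdsWithin] with l hl
    have hl' : (0 : ℝ) < l := hl
    have h1 := hglam l hl' gstar
    have : 0 ≤ l / 2 * ‖glam l‖ ^ 2 := by positivity
    linarith
  have : h = gstar := huniq h (le_antisymm hLh (hmin h))
  subst this
  exact tendsto_iff_norm_sub_tendsto_zero.1 hh
end

section
/- (Cauchy estimate along the regularization path.) Let H be a real Hilbert space, L : H → ℝ convex, and for each λ > 0 let g_λ ∈ H be a minimizer of L_λ(g) = L(g) + (λ/2)‖g‖². Then for any 0 < λ_j ≤ λ_i, ‖g_{λ_j} − g_{λ_i}‖² ≤ ‖g_{λ_j}‖² − ‖g_{λ_i}‖². -/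
open MeasureTheory Filter Set
open scoped RealInnerProductSpace

/-- Cauchy estimate along the regularization path. -/
theorem regularization_path_cauchy
    {H : Type*} [NormedAddCommGroup H] [InnerProductSpace ℝ H] [CompleteSpace H]
    (L : H → ℝ) (hLconv : ConvexOn ℝ Set.univ L)
    (glam : ℝ → H)
    (hglam : ∀ lam : ℝ, 0 < lam → ∀ g : H,
      L (glam lam) + lam / 2 * ‖glam lam‖ ^ 2 ≤ L g + lam / 2 * ‖g‖ ^ 2) :
    ∀ lami lamj : ℝ, 0 < lamj → lamj ≤ lami →
      ‖glam lamj - glam lami‖ ^ 2 ≤ ‖glam lamj‖ ^ 2 - ‖glam lami‖ ^ 2 := by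
  intro lam mu hmu hle
  rcases hle.eq_or_lt with rfl | hlt
  · simp
  have hlam : 0 < lam := hmu.trans hlt
  have h1 := hglam lam hlam (glam mu)
  have h2 := hglam mu hmu (glam lam)
  have key : ∀ t : ℝ, 0 < t → t < 1 → L (glam lam) + lam / 2 * ‖glam lam‖ ^ 2
      + lam / 2 * ((1 - t) * ‖glam mu - glam lam‖ ^ 2)
      ≤ L (glam mu) + lam / 2 * ‖glam mu‖ ^ 2 := by
    intro t ht ht1
    have h3 := hglam lam hlam ((1 - t) • glam lam + t • glam mu)
    have h4 := hLconv.2 (mem_univ (glam lam)) (mem_univ (glam mu))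
      (by linarith : (0 : ℝ) ≤ 1 - t) ht.le (by ring)
    simp only [smul_eq_mul] at h4
    have h5 : ‖(1 - t) • glam lam + t • glam mu‖ ^ 2 = (1 - t) * ‖glam lam‖ ^ 2
        + t * ‖glam mu‖ ^ 2 - t * (1 - t) * ‖glam mu - glam lam‖ ^ 2 := by
      rw [norm_add_sq_real, norm_sub_sq_real, norm_smul, norm_smul, mul_pow, mul_pow,
        real_inner_smul_left, real_inner_smul_right, real_inner_comm (glam lam) (glam mu)]
      simp only [Real.norm_eq_abs, sq_abs]
      ring
    rw [h5] at h3
    refine le_of_mul_le_mul_left ?_ ht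
    linarith
  generalize L (glam lam) = La at *
  generalize L (glam mu) = Lb at *
  generalize ‖glam mu - glam lam‖ ^ 2 = D at *
  generalize ‖glam lam‖ ^ 2 = A at *
  generalize ‖glam mu‖ ^ 2 = B at *
  have hAB : A ≤ B := by
    by_contra h
    push Not at h
    nlinarith [mul_pos (sub_pos.2 hlt) (sub_pos.2 h)]
  have hL : Lb ≤ La := by nlinarith
  by_contra h
  push Not at h
  have hD : 0 < D := by linarith
  have h6 := key ((D - (B - A)) / (2 * D)) (div_pos (by linarith) (by linarith))
    ((div_lt_one (by linarith)).2 (by linarith))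
  have h7 : (1 - (D - (B - A)) / (2 * D)) * D = (D + (B - A)) / 2 := by
    field_simp
    ring
  rw [h7] at h6
  nlinarith [mul_pos hlam (sub_pos.2 h)]
end

section
/- (Co-coercivity of gradients of smooth convex functions.) Let H be a real Hilbert space, L > 0, and f : H → ℝ convex and Fréchet differentiable with gradient ∇f, satisfying the L-smoothness bound f(g+h) ≤ f(g) + ⟨∇f(g), h⟩ + (L/2)‖h‖² for all g, h ∈ H. Then for all u, v ∈ H, ⟨∇f(u) − ∇f(v), u − v⟩ ≥ (1/L)‖∇f(u) − ∇f(v)‖². -/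
open MeasureTheory Filter Set
open scoped RealInnerProductSpace

/-- First-order (supporting hyperplane) inequality for a differentiable convex function. -/
theorem first_order_convex
    {H : Type*} [NormedAddCommGroup H] [InnerProductSpace ℝ H] [CompleteSpace H]
    (f : H → ℝ) (f' : H → H)
    (hconv : ConvexOn ℝ Set.univ f)
    (hgrad : ∀ g : H, HasGradientAt f (f' g) g) (x y : H) :
    f x + ⟪f' x, y - x⟫ ≤ f y := by
  have hc : ConvexOn ℝ Set.univ (fun t : ℝ => f (AffineMap.lineMap x y t)) := by
    have := hconv.comp_affineMap (AffineMap.lineMap (k := ℝ) x y)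
    rw [preimage_univ] at this
    exact this
  have hd : HasDerivAt (fun t : ℝ => f (AffineMap.lineMap x y t)) ⟪f' x, y - x⟫ 0 := by
    have h1 : HasDerivAt (fun t : ℝ => (AffineMap.lineMap x y t : H)) (y - x) 0 :=
      AffineMap.hasDerivAt_lineMap
    have h2 := (hgrad (AffineMap.lineMap x y (0 : ℝ))).hasFDerivAt.comp_hasDerivAt (0 : ℝ) h1
    simpa [Function.comp_def] using h2
  have := hc.le_slope_of_hasDerivAt (mem_univ 0) (mem_univ 1) one_pos hd
  simp [slope_def_field] at this
  rw [inner_sub_right] at *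
  linarith

/-- Co-coercivity of gradients of smooth convex functions. -/
theorem cocoercivity_of_smooth_convex
    {H : Type*} [NormedAddCommGroup H] [InnerProductSpace ℝ H] [CompleteSpace H]
    (L : ℝ) (hL : 0 < L)
    (f : H → ℝ) (f' : H → H)
    (hconv : ConvexOn ℝ Set.univ f)
    (hgrad : ∀ g : H, HasGradientAt f (f' g) g)
    (hsmooth : ∀ g h : H, f (g + h) ≤ f g + ⟪f' g, h⟫ + L / 2 * ‖h‖ ^ 2) :
    ∀ u v : H, 1 / L * ‖f' u - f' v‖ ^ 2 ≤ ⟪f' u - f' v, u - v⟫ := by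
  have key : ∀ u v : H,
      f v + ⟪f' v, u - v⟫ + 1 / (2 * L) * ‖f' u - f' v‖ ^ 2 ≤ f u := by
    intro u v
    have h1 := hsmooth u (-(1 / L) • (f' u - f' v))
    have h2 := first_order_convex f f' hconv hgrad v (u + -(1 / L) • (f' u - f' v))
    have e : u + -(1 / L) • (f' u - f' v) - v = (u - v) + -(1 / L) • (f' u - f' v) := by abel
    have e3 : ⟪f' u, f' u - f' v⟫ - ⟪f' v, f' u - f' v⟫ = ‖f' u - f' v‖ ^ 2 := by
      rw [← inner_sub_left, real_inner_self_eq_norm_sq]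
    rw [e, inner_add_right, inner_smul_right] at h2
    rw [inner_smul_right, norm_smul, mul_pow, Real.norm_eq_abs, sq_abs] at h1
    have e4 : L / 2 * ((-(1 / L)) ^ 2 * ‖f' u - f' v‖ ^ 2)
        = 1 / (2 * L) * ‖f' u - f' v‖ ^ 2 := by field_simp
    have e5 : 1 / L * ‖f' u - f' v‖ ^ 2 = 2 * (1 / (2 * L) * ‖f' u - f' v‖ ^ 2) := by field_simp
    have e6 := congrArg (fun t => 1 / L * t) e3
    simp only [mul_sub] at e6
    linarith
  intro u v
  have h1 := key u v
  have h2 := key v u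
  rw [norm_sub_rev (f' v), ← neg_sub u v, inner_neg_right] at h2
  have e5 : 1 / L * ‖f' u - f' v‖ ^ 2 = 2 * (1 / (2 * L) * ‖f' u - f' v‖ ^ 2) := by field_simp
  rw [inner_sub_left]
  linarith
end

section
/- (Sublinear recursion lemma.) Let γ ≥ 1, ν ≥ 0, and c be real numbers with 0 ≤ c ≤ ν. Let (a_t)_{t≥1} be a sequence of real numbers such that a₁ ≤ ν/(γ+1) and a_{t+1} ≤ (1 − 2/(γ+t))·a_t + c/(γ+t)² for every t ≥ 1, and assume a_t ≥ 0 for all t. Then a_t ≤ ν/(γ+t) for every t ≥ 1. -/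
open Filter Set

/-- Sublinear recursion lemma: the deterministic induction underlying the rate
`E[L_λ(g_t)] − L_λ(g_λ) ≤ ν/(γ+t)` for SGD with learning rates `η_t = 2/(λ(γ+t))`. -/
theorem sublinear_recursion
    (γ ν c : ℝ) (hγ : 1 ≤ γ) (hν : 0 ≤ ν) (hc0 : 0 ≤ c) (hcν : c ≤ ν)
    (a : ℕ → ℝ)
    (ha1 : a 1 ≤ ν / (γ + 1))
    (hrec : ∀ t : ℕ, 1 ≤ t →
      a (t + 1) ≤ (1 - 2 / (γ + t)) * a t + c / (γ + t) ^ 2)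
    (hnonneg : ∀ t : ℕ, 0 ≤ a t) :
    ∀ t : ℕ, 1 ≤ t → a t ≤ ν / (γ + t) := by
  intro t ht
  induction t, ht using Nat.le_induction with
  | base => simpa using ha1
  | succ t ht ih =>
    have h1 := hrec t ht
    have ht' : (1 : ℝ) ≤ t := by exact_mod_cast ht
    push_cast
    rw [← add_assoc]
    have hs : 2 ≤ γ + (t : ℝ) := by linarith
    generalize γ + (t : ℝ) = s at h1 ih hs ⊢
    have hs0 : 0 < s := by linarith
    have h2 : 0 ≤ 1 - 2 / s := by
      rw [sub_nonneg, div_le_one hs0]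
      exact hs
    have h3 : (1 - 2 / s) * a t ≤ (1 - 2 / s) * (ν / s) := mul_le_mul_of_nonneg_left ih h2
    have h4 : c / s ^ 2 ≤ ν / s ^ 2 := by gcongr
    have h5 : (1 - 2 / s) * (ν / s) + ν / s ^ 2 = ν * (s - 1) / s ^ 2 := by
      field_simp
      ring
    have h6 : ν * (s - 1) / s ^ 2 ≤ ν / (s + 1) := by
      rw [div_le_div_iff₀ (by positivity) (by positivity)]
      nlinarith
    linarith
end
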